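/- arXiv:1506.06645 — 3 statements merged into one kernel-verified Lean document; each statement's English description precedes it below -/
import Mathlib

section
/- Let ν ∈ (0,1), t0 > 0 and η ∈ ℂ, and define f : (t0,∞) → ℂ by f(t) = E_{ν,1}(η (log(t/t0))^ν) = ∑_{k=0}^∞ η^k (log(t/t0))^{νk} / Γ(νk+1). Then for every t > t0 the Caputo-type Hadamard fractional derivative of order ν (with base point t0) of f satisfies (D^ν f)(t) = η · f(t), i.e. f is an eigenfunction of D^ν with eigenvalue η. -/
open MeasureTheory intervalIntegral

/-- The two-parameter Mittag-Leffler function `E_{γ,μ}(z) = ∑ z^k / Γ(γ k + μ)`. -/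
noncomputable def mittagLeffler (γ μ : ℝ) (z : ℂ) : ℂ :=
  ∑' k : ℕ, z ^ k / (Real.Gamma (γ * k + μ) : ℂ)

/-- The Caputo-type Hadamard fractional derivative of order `ν ∈ (0,1)` with base
point `t0 > 0`, applied componentwise to a complex-valued function:
`(D^ν u)(t) = (1/Γ(1-ν)) ∫_{t0}^t (log (t/τ))^{-ν} (τ u'(τ)) dτ/τ`. -/
noncomputable def hadamardCaputoC (ν t0 : ℝ) (u : ℝ → ℂ) (t : ℝ) : ℂ :=
  (1 / (Real.Gamma (1 - ν) : ℂ)) *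
    ∫ τ in t0..t, (((Real.log (t / τ)) ^ (-ν) : ℝ) : ℂ) * ((τ : ℂ) * deriv u τ) / (τ : ℂ)

lemma ml_gamma_lower (R x : ℝ) (hR : 0 < R) (hx : 0 ≤ x) :
    Real.exp (-R) * R ^ x ≤ Real.Gamma (x + 1) := by
  have hx1 : 0 < x + 1 := by linarith
  have hc := Real.GammaIntegral_convergent hx1
  rw [Real.Gamma_eq_integral hx1]
  have hsub : Set.Ioi R ⊆ Set.Ioi (0 : ℝ) := Set.Ioi_subset_Ioi hR.le
  calc Real.exp (-R) * R ^ x = ∫ u in Set.Ioi R, Real.exp (-u) * R ^ x := by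
        rw [MeasureTheory.integral_mul_const, integral_exp_neg_Ioi]
    _ ≤ ∫ u in Set.Ioi R, Real.exp (-u) * u ^ (x + 1 - 1) := by
        refine setIntegral_mono_on ((integrableOn_exp_neg_Ioi R).mul_const _)
          (hc.mono_set hsub) measurableSet_Ioi ?_
        intro u hu
        have hu' : R < u := hu
        rw [add_sub_cancel_right]
        have := Real.rpow_le_rpow hR.le hu'.le hx
        gcongr
    _ ≤ _ := by
        refine setIntegral_mono_set hc ?_ hsub.eventuallyLE
        filter_upwards [ae_restrict_mem measurableSet_Ioi] with u hu
        have hu' : 0 < u := hu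
        simp only [Pi.zero_apply]
        positivity

lemma ml_summable (ν : ℝ) (hν : 0 < ν) (r : ℝ) (hr : 0 ≤ r) :
    Summable fun k : ℕ => r ^ k / Real.Gamma (ν * k + 1) := by
  set R : ℝ := (2 * r + 1) ^ (1 / ν) with hRdef
  have hb : 0 < 2 * r + 1 := by linarith
  have hR : 0 < R := Real.rpow_pos_of_pos hb _
  have hRν : R ^ ν = 2 * r + 1 := by
    rw [hRdef, ← Real.rpow_mul hb.le, one_div_mul_cancel hν.ne', Real.rpow_one]
  refine Summable.of_nonneg_of_le (f := fun k : ℕ => Real.exp R * (1 / 2) ^ k) ?_ ?_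
    (summable_geometric_two.mul_left _)
  · intro k
    have : 0 < Real.Gamma (ν * k + 1) := Real.Gamma_pos_of_pos (by positivity)
    positivity
  · intro k
    have hG : 0 < Real.Gamma (ν * k + 1) := Real.Gamma_pos_of_pos (by positivity)
    have h := ml_gamma_lower R (ν * k) hR (by positivity)
    rw [Real.rpow_mul hR.le, hRν, Real.rpow_natCast] at h
    rw [div_le_iff₀ hG]
    calc r ^ k = (1 / 2) ^ k * (2 * r) ^ k := by rw [← mul_pow]; congr 1; ring
      _ ≤ (1 / 2) ^ k * (2 * r + 1) ^ k := by gcongr; linarith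
      _ = Real.exp R * (1 / 2) ^ k * (Real.exp (-R) * (2 * r + 1) ^ k) := by
          rw [Real.exp_neg]; field_simp
      _ ≤ _ := by gcongr

lemma ml_hasDerivAt (ν : ℝ) (hν : 0 < ν) (z : ℂ) :
    HasDerivAt (mittagLeffler ν 1)
      (∑' k : ℕ, ((k : ℂ) + 1) * z ^ k / (Real.Gamma (ν * (k + 1) + 1) : ℂ)) z := by
  set r : ℝ := ‖z‖ + 1 with hr
  have hr1 : 1 ≤ r := by have := norm_nonneg z; linarith
  have hr0 : 0 < r := by linarith
  have hu : Summable fun k : ℕ => (2 * r) ^ k / Real.Gamma (ν * k + 1) :=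
    ml_summable ν hν _ (by linarith)
  have hb : ∀ (k : ℕ), ∀ y ∈ Metric.ball (0 : ℂ) r,
      ‖((k : ℂ) * y ^ (k - 1)) / (Real.Gamma (ν * k + 1) : ℂ)‖
        ≤ (2 * r) ^ k / Real.Gamma (ν * k + 1) := by
    intro k y hy
    have hG : 0 < Real.Gamma (ν * k + 1) := Real.Gamma_pos_of_pos (by positivity)
    have hy' : ‖y‖ ≤ r := by simpa using (mem_ball_zero_iff.mp hy).le
    rw [norm_div, Complex.norm_real, Real.norm_of_nonneg hG.le, norm_mul, norm_pow,
      Complex.norm_natCast, mul_pow]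
    have h1 : (k : ℝ) ≤ 2 ^ k := by exact_mod_cast Nat.lt_two_pow_self.le
    have h2 : ‖y‖ ^ (k - 1) ≤ r ^ k :=
      (pow_le_pow_left₀ (norm_nonneg _) hy' _).trans (pow_le_pow_right₀ hr1 (Nat.sub_le _ _))
    gcongr
  have hz : z ∈ Metric.ball (0 : ℂ) r := by simp [hr]
  have h0 : (0 : ℂ) ∈ Metric.ball (0 : ℂ) r := by simpa using hr0
  have key := hasDerivAt_tsum_of_isPreconnected
    (g := fun (k : ℕ) (y : ℂ) => y ^ k / (Real.Gamma (ν * k + 1) : ℂ))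
    (g' := fun (k : ℕ) (y : ℂ) => ((k : ℂ) * y ^ (k - 1)) / (Real.Gamma (ν * k + 1) : ℂ))
    hu Metric.isOpen_ball (convex_ball (0 : ℂ) r).isPreconnected
    (fun k y _ => (hasDerivAt_pow k y).div_const _) hb h0
    (by
      refine summable_of_ne_finset_zero (s := {0}) ?_
      intro k hk
      have : k ≠ 0 := by simpa using hk
      simp [this]) hz
  have hs : Summable fun k : ℕ =>
      ((k : ℂ) * z ^ (k - 1)) / (Real.Gamma (ν * k + 1) : ℂ) :=
    Summable.of_norm_bounded hu (fun k => hb k z hz)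
  rw [hs.tsum_eq_zero_add] at key
  have hfun : mittagLeffler ν 1 =
      fun z : ℂ => ∑' k : ℕ, z ^ k / (Real.Gamma (ν * k + 1) : ℂ) := rfl
  rw [hfun]
  simpa using key

lemma ml_beta (p q L : ℝ) (hp : 0 < p) (hq : 0 < q) (hL : 0 < L) :
    ∫ s in Set.Ioo 0 L, (L - s) ^ (q - 1) * s ^ (p - 1)
      = L ^ (p + q - 1) * (Real.Gamma p * Real.Gamma q / Real.Gamma (p + q)) := by
  have h := Complex.betaIntegral_scaled (p : ℂ) (q : ℂ) hL
  have h2 := Complex.Gamma_mul_Gamma_eq_betaIntegral (s := (p : ℂ)) (t := (q : ℂ))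
    (by simpa using hp) (by simpa using hq)
  have hG : (Real.Gamma (p + q) : ℂ) ≠ 0 := by
    exact_mod_cast (Real.Gamma_pos_of_pos (by linarith : 0 < p + q)).ne'
  have h3 : Complex.betaIntegral p q
      = (Real.Gamma p * Real.Gamma q / Real.Gamma (p + q) : ℂ) := by
    rw [eq_div_iff hG, mul_comm]
    rw [← Complex.ofReal_add, Complex.Gamma_ofReal, Complex.Gamma_ofReal,
      Complex.Gamma_ofReal] at h2
    exact h2.symm
  rw [intervalIntegral.integral_of_le hL.le, integral_Ioc_eq_integral_Ioo, h3] at h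
  apply Complex.ofReal_injective
  rw [← integral_complex_ofReal]
  push_cast
  rw [Complex.ofReal_cpow hL.le]
  push_cast
  rw [← h]
  refine setIntegral_congr_fun measurableSet_Ioo ?_
  intro s hs
  simp only
  rw [Complex.ofReal_cpow (by linarith [hs.2] : 0 ≤ L - s), Complex.ofReal_cpow hs.1.le]
  push_cast
  ring

lemma ml_beta_int (p q L : ℝ) (hp : 0 < p) (hq : 0 < q) (hL : 0 < L) :
    IntegrableOn (fun s => (L - s) ^ (q - 1) * s ^ (p - 1)) (Set.Ioo 0 L) := by
  by_contra hcon
  have h := ml_beta p q L hp hq hL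
  rw [integral_undef hcon] at h
  have h1 := Real.Gamma_pos_of_pos hp
  have h2 := Real.Gamma_pos_of_pos hq
  have h3 := Real.Gamma_pos_of_pos (by linarith : 0 < p + q)
  have h4 : 0 < L ^ (p + q - 1) * (Real.Gamma p * Real.Gamma q / Real.Gamma (p + q)) := by
    positivity
  linarith

lemma ml_deriv (ν t0 : ℝ) (hν : 0 < ν) (ht0 : 0 < t0) (η : ℂ) (s : ℝ) (hs : 0 < s) :
    deriv (fun t => mittagLeffler ν 1 (η * (((Real.log (t / t0)) ^ ν : ℝ) : ℂ)))
      (t0 * Real.exp s)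
    = (∑' k : ℕ, η ^ (k + 1) / (Real.Gamma (ν * (k + 1)) : ℂ) * ((s ^ (ν * (k + 1) - 1) : ℝ) : ℂ))
        / ((t0 * Real.exp s : ℝ) : ℂ) := by
  have hτ : 0 < t0 * Real.exp s := by positivity
  have hlog : Real.log (t0 * Real.exp s / t0) = s := by
    rw [mul_div_cancel_left₀ _ ht0.ne', Real.log_exp]
  have d1 : HasDerivAt (fun t : ℝ => Real.log (t / t0)) (1 / (t0 * Real.exp s))
      (t0 * Real.exp s) := by
    have h : HasDerivAt (fun t : ℝ => Real.log (t / t0))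
        (1 / t0 / (t0 * Real.exp s / t0)) (t0 * Real.exp s) :=
      ((hasDerivAt_id' (t0 * Real.exp s)).div_const t0).log (by positivity)
    have e : 1 / t0 / (t0 * Real.exp s / t0) = 1 / (t0 * Real.exp s) := by field_simp
    rwa [e] at h
  have d2 : HasDerivAt (fun t : ℝ => (Real.log (t / t0)) ^ ν)
      (1 / (t0 * Real.exp s) * ν * s ^ (ν - 1)) (t0 * Real.exp s) := by
    have := d1.rpow_const (p := ν) (Or.inl (by rw [hlog]; exact hs.ne'))
    rwa [hlog] at this
  have d3 := (d2.ofReal_comp).const_mul η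
  have d4 := HasDerivAt.scomp (t0 * Real.exp s)
    (h := fun t : ℝ => η * ((Real.log (t / t0) ^ ν : ℝ) : ℂ))
    (ml_hasDerivAt ν hν (η * ((Real.log (t0 * Real.exp s / t0) ^ ν : ℝ) : ℂ))) d3
  have d5 := d4.deriv
  rw [hlog] at d5
  refine Eq.trans d5 ?_
  rw [smul_eq_mul, ← tsum_mul_left, ← tsum_div_const]
  refine tsum_congr fun k => ?_
  have hk : 0 < ν * (k + 1) := by positivity
  have hG : (Real.Gamma (ν * (k + 1)) : ℂ) ≠ 0 := by
    exact_mod_cast (Real.Gamma_pos_of_pos hk).ne'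
  have hpow : s ^ (ν * (k + 1) - 1) = (s ^ ν) ^ k * s ^ (ν - 1) := by
    rw [← Real.rpow_natCast, ← Real.rpow_mul hs.le, ← Real.rpow_add hs]
    congr 1; ring
  rw [Real.Gamma_add_one hk.ne', hpow]
  have e1 : (ν : ℂ) ≠ 0 := by exact_mod_cast hν.ne'
  have e2 : (k : ℂ) + 1 ≠ 0 := by exact_mod_cast Nat.succ_ne_zero k
  have e3 : ((t0 * Real.exp s : ℝ) : ℂ) ≠ 0 := by exact_mod_cast hτ.ne'
  push_cast at e3 ⊢
  have e4 := left_ne_zero_of_mul e3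
  have e5 := right_ne_zero_of_mul e3
  rw [mul_pow, pow_succ]
  field_simp

/-- For `ν ∈ (0,1)`, `t0 > 0` and `η ∈ ℂ`, the function
`f t = E_{ν,1}(η (log (t/t0))^ν)` is an eigenfunction of the Caputo-type Hadamard
derivative of order `ν` with eigenvalue `η`. -/
theorem hadamardCaputo_mittagLeffler_eigenfunction
    (ν t0 : ℝ) (hν : ν ∈ Set.Ioo (0 : ℝ) 1) (ht0 : 0 < t0) (η : ℂ)
    (f : ℝ → ℂ)
    (hf : f = fun t => mittagLeffler ν 1 (η * (((Real.log (t / t0)) ^ ν : ℝ) : ℂ)))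
    (t : ℝ) (ht : t0 < t) :
    hadamardCaputoC ν t0 f t = η * f t := by
  obtain ⟨hν0, hν1⟩ := hν
  have ht0' : 0 < t := ht0.trans ht
  set L := Real.log (t / t0) with hL
  have hLpos : 0 < L := Real.log_pos ((one_lt_div ht0).2 ht)
  have htL : t = t0 * Real.exp L := by
    rw [hL, Real.exp_log (by positivity)]; field_simp
  have himg : (fun s => t0 * Real.exp s) '' Set.Ioo 0 L = Set.Ioo t0 t := by
    ext τ
    constructor
    · rintro ⟨s, hs, rfl⟩
      refine ⟨?_, ?_⟩
      · have := Real.one_lt_exp_iff.2 hs.1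
        simp only
        nlinarith
      · rw [htL]
        have := Real.exp_lt_exp.2 hs.2
        simp only
        gcongr
    · rintro ⟨h1, h2⟩
      have hτ : 0 < τ := ht0.trans h1
      refine ⟨Real.log (τ / t0), ⟨Real.log_pos ((one_lt_div ht0).2 h1), ?_⟩, ?_⟩
      · rw [hL]
        exact Real.log_lt_log (by positivity) (by gcongr)
      · simp only
        rw [Real.exp_log (by positivity)]; field_simp
  set G : ℕ → ℝ → ℂ := fun k s => η ^ (k + 1) / (Real.Gamma (ν * (k + 1)) : ℂ) *
    (((L - s) ^ ((1 - ν) - 1) * s ^ (ν * (k + 1) - 1) : ℝ) : ℂ) with hGdef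
  have hI : ∫ τ in t0..t, (((Real.log (t / τ)) ^ (-ν) : ℝ) : ℂ) * ((τ : ℂ) * deriv f τ) / (τ : ℂ)
      = ∫ s in Set.Ioo 0 L, ∑' k, G k s := by
    rw [intervalIntegral.integral_of_le ht.le, integral_Ioc_eq_integral_Ioo, ← himg,
      integral_image_eq_integral_abs_deriv_smul measurableSet_Ioo
        (f' := fun s => t0 * Real.exp s)
        (fun x _ => ((Real.hasDerivAt_exp x).const_mul t0).hasDerivWithinAt)
        (fun a _ b _ hab => Real.exp_injective (mul_left_cancel₀ ht0.ne' hab))]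
    refine setIntegral_congr_fun measurableSet_Ioo ?_
    intro s hs
    have hpos : 0 < t0 * Real.exp s := by positivity
    have e3 : ((t0 * Real.exp s : ℝ) : ℂ) ≠ 0 := by exact_mod_cast hpos.ne'
    have hlog : Real.log (t / (t0 * Real.exp s)) = L - s := by
      rw [htL, mul_div_mul_left _ _ ht0.ne', ← Real.exp_sub, Real.log_exp]
    simp only [hGdef]
    rw [abs_of_pos hpos, hlog, hf, ml_deriv ν t0 hν0 ht0 η s hs.1, Complex.real_smul,
      show (1 - ν) - 1 = -ν by ring]
    have : ∀ T c : ℂ, ((t0 * Real.exp s : ℝ) : ℂ) * (c * (((t0 * Real.exp s : ℝ) : ℂ) *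
        (T / ((t0 * Real.exp s : ℝ) : ℂ))) / ((t0 * Real.exp s : ℝ) : ℂ)) = c * T := by
      intro T c
      field_simp
    rw [this, ← tsum_mul_left]
    refine tsum_congr fun k => ?_
    push_cast
    ring
  have hp : ∀ k : ℕ, 0 < ν * ((k : ℝ) + 1) := fun k => by positivity
  have hq : 0 < 1 - ν := by linarith
  have hGq : 0 < Real.Gamma (1 - ν) := Real.Gamma_pos_of_pos hq
  have hbeta : ∀ k : ℕ, ∫ s in Set.Ioo 0 L, (L - s) ^ ((1 - ν) - 1) * s ^ (ν * ((k : ℝ) + 1) - 1)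
      = (L ^ ν) ^ k *
        (Real.Gamma (ν * (k + 1)) * Real.Gamma (1 - ν) / Real.Gamma (ν * k + 1)) := by
    intro k
    rw [ml_beta _ _ L (hp k) hq hLpos, ← Real.rpow_natCast, ← Real.rpow_mul hLpos.le]
    congr 2
    · ring
    · congr 1; ring
  have hint : ∀ k, Integrable (G k) (volume.restrict (Set.Ioo 0 L)) := fun k =>
    ((ml_beta_int _ _ L (hp k) hq hLpos).ofReal).const_mul _
  have hnorm : ∀ k, ∫ s in Set.Ioo 0 L, ‖G k s‖ = (‖η‖ * Real.Gamma (1 - ν)) *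
      ((‖η‖ * L ^ ν) ^ k / Real.Gamma (ν * k + 1)) := by
    intro k
    have hGp := Real.Gamma_pos_of_pos (hp k)
    have : ∫ s in Set.Ioo 0 L, ‖G k s‖ = ∫ s in Set.Ioo 0 L,
        (‖η‖ ^ (k + 1) / Real.Gamma (ν * (k + 1))) *
          ((L - s) ^ ((1 - ν) - 1) * s ^ (ν * ((k : ℝ) + 1) - 1)) := by
      refine setIntegral_congr_fun measurableSet_Ioo ?_
      intro s hs
      have h1 : 0 < s := hs.1
      have h2 : 0 < L - s := by linarith [hs.2]
      simp only [hGdef]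
      rw [norm_mul, norm_div, norm_pow, Complex.norm_real, Complex.norm_real,
        Real.norm_of_nonneg hGp.le, Real.norm_of_nonneg (by positivity)]
    rw [this, MeasureTheory.integral_const_mul, hbeta, mul_pow, pow_succ]
    field_simp
  have hval : ∀ k, ∫ s in Set.Ioo 0 L, G k s = (η * Real.Gamma (1 - ν)) *
      ((η * ((L ^ ν : ℝ) : ℂ)) ^ k / (Real.Gamma (ν * k + 1) : ℂ)) := by
    intro k
    have hGp : (Real.Gamma (ν * (k + 1)) : ℂ) ≠ 0 := by
      exact_mod_cast (Real.Gamma_pos_of_pos (hp k)).ne'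
    simp only [hGdef]
    rw [MeasureTheory.integral_const_mul, integral_complex_ofReal, hbeta, mul_pow, pow_succ]
    push_cast
    field_simp
  have hsum : Summable fun k => ∫ s in Set.Ioo 0 L, ‖G k s‖ := by
    simp_rw [hnorm]
    exact (ml_summable ν hν0 _ (by positivity)).mul_left _
  have hS := (hasSum_integral_of_summable_integral_norm hint hsum).tsum_eq
  have hGq' : (Real.Gamma (1 - ν) : ℂ) ≠ 0 := by exact_mod_cast hGq.ne'
  rw [hadamardCaputoC, hI, ← hS]
  simp_rw [hval]
  rw [tsum_mul_left, hf]
  simp only [mittagLeffler, ← hL]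
  field_simp
end

section
/- (Theorem 3.1, Fourier-space form.) Let ν ∈ (0,1), λ > 0, c > 0, t0 > 0 and β ∈ ℝ with λ² ≠ c²β². Let w = √(λ² - c²β²) ∈ ℂ (principal branch), η₁ = -λ + w, η₂ = -λ - w, and define u* : [t0,∞) → ℂ by u*(t) = ½ (1 + λ/w) E_{ν,1}(η₁ (log(t/t0))^ν) + ½ (1 - λ/w) E_{ν,1}(η₂ (log(t/t0))^ν). Then u*(t0) = 1 and, for every t > t0, (D^ν (D^ν u*))(t) + 2λ (D^ν u*)(t) = -c²β² u*(t), where D^ν is the Caputo-type Hadamard fractional derivative of order ν with base point t0. (That is, u* is the Fourier transform at frequency β of the solution of the time-fractional telegraph equation involving Hadamard derivatives with initial datum δ(x).) -/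
open MeasureTheory intervalIntegral

open Set Filter Topology

lemma gamma_lower (R s : ℝ) (hR : 0 < R) (hs : 0 ≤ s) :
    R ^ s * Real.exp (-R) ≤ Real.Gamma (s + 1) := by
  have hint := Real.GammaIntegral_convergent (s := s + 1) (by linarith)
  rw [Real.Gamma_eq_integral (by linarith), ← integral_exp_neg_Ioi R,
    ← MeasureTheory.integral_const_mul]
  have hsub : Ioi R ⊆ Ioi (0:ℝ) := Ioi_subset_Ioi hR.le
  calc _ ≤ ∫ x in Ioi R, Real.exp (-x) * x ^ (s + 1 - 1) := by
        refine setIntegral_mono_on ?_ (hint.mono_set hsub) measurableSet_Ioi ?_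
        · exact (integrableOn_exp_neg_Ioi R).const_mul _
        · intro x hx
          have hx' : R < x := hx
          rw [add_sub_cancel_right, mul_comm]
          gcongr
    _ ≤ _ := by
        refine setIntegral_mono_set hint ?_ hsub.eventuallyLE
        refine (ae_restrict_mem measurableSet_Ioi).mono fun x hx => ?_
        have hx' : 0 < x := hx
        positivity

def GeomBd (p : ℕ → ℂ) : Prop := ∃ C r : ℝ, 0 ≤ r ∧ ∀ k, ‖p k‖ ≤ C * r ^ k

lemma summ (ν : ℝ) (hν : 0 < ν) (p : ℕ → ℂ) (hp : GeomBd p) (R : ℝ) (hR : 0 ≤ R) :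
    Summable (fun k : ℕ => ‖p k‖ * R ^ k / Real.Gamma (ν * k + 1)) := by
  obtain ⟨C, r, hr, h⟩ := hp
  set Q : ℝ := (2 * (r * R + 1)) ^ (ν⁻¹) with hQ
  have hpos : 0 < r * R + 1 := by positivity
  have hQ0 : 0 < Q := by positivity
  have hQk : ∀ k : ℕ, Q ^ (ν * k) = (2 * (r * R + 1)) ^ k := by
    intro k
    have h1 : Q ^ ν = 2 * (r * R + 1) := by
      rw [hQ, ← Real.rpow_mul (by positivity), inv_mul_cancel₀ hν.ne', Real.rpow_one]
    rw [Real.rpow_mul hQ0.le, h1, Real.rpow_natCast]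
  have hC : 0 ≤ C := by simpa using (norm_nonneg _).trans (h 0)
  refine Summable.of_nonneg_of_le (f := fun k : ℕ => C * Real.exp Q * (1 / 2 : ℝ) ^ k) ?_ ?_
    (summable_geometric_two.mul_left _)
  · intro k
    have := Real.Gamma_pos_of_pos (s := ν * k + 1) (by positivity)
    positivity
  · intro k
    have hG := gamma_lower Q (ν * k) hQ0 (by positivity)
    rw [hQk] at hG
    have hGp := Real.Gamma_pos_of_pos (s := ν * k + 1) (by positivity)
    rw [div_le_iff₀ hGp]
    calc ‖p k‖ * R ^ k ≤ (C * r ^ k) * R ^ k := by gcongr; exact h k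
      _ = C * (r * R) ^ k := by rw [mul_pow]; ring
      _ ≤ C * (r * R + 1) ^ k := by gcongr; linarith
      _ = C * Real.exp Q * (1 / 2) ^ k * ((2 * (r * R + 1)) ^ k * Real.exp (-Q)) := by
        rw [mul_pow 2, Real.exp_neg, div_pow, one_pow]; field_simp
      _ ≤ _ := by gcongr

/-- generalized Mittag-Leffler series -/
noncomputable def GS (ν : ℝ) (p : ℕ → ℂ) (z : ℂ) : ℂ :=
  ∑' k : ℕ, p k * z ^ k / (Real.Gamma (ν * k + 1) : ℂ)

lemma norm_term (ν : ℝ) (hν : 0 < ν) (p : ℕ → ℂ) (z : ℂ) (k : ℕ) :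
    ‖p k * z ^ k / (Real.Gamma (ν * k + 1) : ℂ)‖ =
      ‖p k‖ * ‖z‖ ^ k / Real.Gamma (ν * k + 1) := by
  have hGp := Real.Gamma_pos_of_pos (s := ν * k + 1) (by positivity)
  rw [norm_div, norm_mul, norm_pow, Complex.norm_real, Real.norm_of_nonneg hGp.le]

lemma GS_summable (ν : ℝ) (hν : 0 < ν) (p : ℕ → ℂ) (hp : GeomBd p) (z : ℂ) :
    Summable (fun k : ℕ => p k * z ^ k / (Real.Gamma (ν * k + 1) : ℂ)) := by
  refine Summable.of_norm ?_
  simp_rw [norm_term ν hν]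
  exact summ ν hν p hp _ (norm_nonneg _)

lemma GS_deriv (ν : ℝ) (hν : 0 < ν) (p : ℕ → ℂ) (hp : GeomBd p) (z : ℂ) :
    ∃ d, HasDerivAt (GS ν p) d z ∧
      HasSum (fun k : ℕ => p (k+1) * ((k + 1 : ℕ) * z ^ k) / (Real.Gamma (ν * (k + 1 : ℕ) + 1) : ℂ)) d := by
  have hs := summ ν hν p hp (‖z‖ + 1) (by positivity)
  have hb : ∀ (k : ℕ) (w : ℂ), w ∈ Metric.ball (0:ℂ) (‖z‖ + 1) →
      ‖p k * w ^ k / (Real.Gamma (ν * k + 1) : ℂ)‖ ≤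
        ‖p k‖ * (‖z‖ + 1) ^ k / Real.Gamma (ν * k + 1) := by
    intro k w hw
    have hGp := Real.Gamma_pos_of_pos (s := ν * k + 1) (by positivity)
    rw [norm_term ν hν]
    have : ‖w‖ ≤ ‖z‖ + 1 := by simpa using (mem_ball_zero_iff.1 hw).le
    gcongr
  have hz : z ∈ Metric.ball (0:ℂ) (‖z‖ + 1) := by simp
  have hd : ∀ k : ℕ, DifferentiableOn ℂ
      (fun w : ℂ => p k * w ^ k / (Real.Gamma (ν * k + 1) : ℂ)) (Metric.ball (0:ℂ) (‖z‖ + 1)) := by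
    intro k
    fun_prop
  have h1 := Complex.differentiableOn_tsum_of_summable_norm hs hd Metric.isOpen_ball hb
  have h2 := Complex.hasSum_deriv_of_summable_norm hs hd Metric.isOpen_ball hb hz
  refine ⟨_, (h1.differentiableAt (Metric.isOpen_ball.mem_nhds hz)).hasDerivAt, ?_⟩
  have h3 := (hasSum_nat_add_iff' 1).2 h2
  convert! h3 using 1
  · funext k
    simp [deriv_div_const, deriv_const_mul_field]
  · simp

lemma GS_rpow_deriv (ν : ℝ) (hν : 0 < ν) (p : ℕ → ℂ) (hp : GeomBd p) (y : ℝ) (hy : 0 < y) :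
    ∃ d, HasDerivAt (fun y : ℝ => GS ν p ((y ^ ν : ℝ) : ℂ)) d y ∧
      HasSum (fun k : ℕ => p (k+1) * ((y ^ (ν * (k + 1 : ℕ) - 1) / Real.Gamma (ν * (k + 1 : ℕ)) : ℝ) : ℂ)) d := by
  obtain ⟨d, h1, h2⟩ := GS_deriv ν hν p hp ((y ^ ν : ℝ) : ℂ)
  have h3 : HasDerivAt (fun y : ℝ => ((y ^ ν : ℝ) : ℂ)) ((ν * y ^ (ν - 1) : ℝ) : ℂ) y :=
    (Real.hasDerivAt_rpow_const (Or.inl hy.ne')).ofReal_comp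
  have h4 := h1.comp y h3
  refine ⟨_, h4, ?_⟩
  convert! h2.mul_right ((ν * y ^ (ν - 1) : ℝ) : ℂ) using 1
  funext k
  have hpos : 0 < ν * (k + 1 : ℕ) := by positivity
  have hG := (Real.Gamma_pos_of_pos hpos).ne'
  have e : y ^ (ν * (k + 1 : ℕ) - 1) = (y ^ ν) ^ k * y ^ (ν - 1) := by
    rw [← Real.rpow_natCast, ← Real.rpow_mul hy.le, ← Real.rpow_add hy]
    congr 1; push_cast; ring
  rw [Real.Gamma_add_one hpos.ne', e]
  have hG' : (Real.Gamma (ν * (k + 1 : ℕ)) : ℂ) ≠ 0 := by exact_mod_cast hG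
  have hk : ((k + 1 : ℕ) : ℂ) ≠ 0 := by exact_mod_cast Nat.succ_ne_zero k
  have hνc : (ν : ℂ) ≠ 0 := by exact_mod_cast hν.ne'
  push_cast at *
  field_simp

lemma beta_real (a b x : ℝ) (ha : 0 < a) (hb : 0 < b) (hx : 0 < x) :
    IntegrableOn (fun y : ℝ => y ^ (a - 1) * (x - y) ^ (b - 1)) (Ioo 0 x) ∧
    ∫ y in Ioo 0 x, y ^ (a - 1) * (x - y) ^ (b - 1) =
      x ^ (a + b - 1) * (Real.Gamma a * Real.Gamma b / Real.Gamma (a + b)) := by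
  have key : ∫ y in Ioo 0 x, y ^ (a - 1) * (x - y) ^ (b - 1) =
      x ^ (a + b - 1) * (Real.Gamma a * Real.Gamma b / Real.Gamma (a + b)) := by
    have h := Complex.betaIntegral_scaled a b hx
    rw [Complex.betaIntegral_eq_Gamma_mul_div _ _ (by simpa) (by simpa),
      intervalIntegral.integral_of_le hx.le, integral_Ioc_eq_integral_Ioo] at h
    have e : ∫ y in Ioo 0 x, (y : ℂ) ^ ((a:ℂ) - 1) * ((x : ℂ) - y) ^ ((b:ℂ) - 1) =
        ((∫ y in Ioo 0 x, y ^ (a - 1) * (x - y) ^ (b - 1) : ℝ) : ℂ) := by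
      rw [← integral_complex_ofReal]
      refine setIntegral_congr_fun measurableSet_Ioo fun y hy => ?_
      have h1 : 0 ≤ y := hy.1.le
      have h2 : 0 ≤ x - y := sub_nonneg.2 hy.2.le
      push_cast [Complex.ofReal_cpow h1, Complex.ofReal_cpow h2]
      rfl
    rw [e] at h
    have e2 : (x : ℂ) ^ ((a : ℂ) + b - 1) * (Complex.Gamma a * Complex.Gamma b / Complex.Gamma (a + b))
       = ((x ^ (a + b - 1) * (Real.Gamma a * Real.Gamma b / Real.Gamma (a + b)) : ℝ) : ℂ) := by
      push_cast [Complex.ofReal_cpow hx.le, ← Complex.Gamma_ofReal]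
      rfl
    rw [e2] at h
    exact_mod_cast h
  refine ⟨Integrable.of_integral_ne_zero ?_, key⟩
  rw [key]
  have h1 := Real.Gamma_pos_of_pos ha
  have h2 := Real.Gamma_pos_of_pos hb
  have h3 := Real.Gamma_pos_of_pos (add_pos ha hb)
  positivity

lemma geomBd_shift (p : ℕ → ℂ) (hp : GeomBd p) : GeomBd (fun k => p (k + 1)) := by
  obtain ⟨C, r, hr, h⟩ := hp
  exact ⟨C * r, r, hr, fun k => (h (k + 1)).trans_eq (by ring)⟩

lemma frac_int (ν : ℝ) (hν : ν ∈ Ioo (0:ℝ) 1) (p : ℕ → ℂ) (hp : GeomBd p) (x : ℝ) (hx : 0 < x) :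
    ∫ y in Ioo 0 x, (((x - y) ^ (-ν) : ℝ) : ℂ) * deriv (fun y : ℝ => GS ν p ((y ^ ν : ℝ) : ℂ)) y
      = (Real.Gamma (1 - ν) : ℂ) * GS ν (fun k => p (k + 1)) ((x ^ ν : ℝ) : ℂ) := by
  have hν0 := hν.1
  have hG1 : 0 < Real.Gamma (1 - ν) := Real.Gamma_pos_of_pos (by linarith [hν.2])
  have hb : ∀ k : ℕ, IntegrableOn (fun y : ℝ => y ^ (ν * (k + 1 : ℕ) - 1) * (x - y) ^ (-ν)) (Ioo 0 x) ∧
      ∫ y in Ioo 0 x, y ^ (ν * (k + 1 : ℕ) - 1) * (x - y) ^ (-ν) =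
      (x ^ ν) ^ k * (Real.Gamma (ν * (k + 1 : ℕ)) * Real.Gamma (1 - ν) / Real.Gamma (ν * k + 1)) := by
    intro k
    have := beta_real (ν * (k + 1 : ℕ)) (1 - ν) x (by positivity) (by linarith [hν.2]) hx
    rw [show 1 - ν - 1 = -ν by ring, show ν * (k + 1 : ℕ) + (1 - ν) = ν * k + 1 by push_cast; ring,
      add_sub_cancel_right, Real.rpow_mul hx.le, Real.rpow_natCast] at this
    exact this
  set F : ℕ → ℝ → ℂ := fun k y =>
    (p (k+1) * ((1 / Real.Gamma (ν * (k + 1 : ℕ)) : ℝ) : ℂ)) *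
      ((y ^ (ν * (k + 1 : ℕ) - 1) * (x - y) ^ (-ν) : ℝ) : ℂ) with hF
  have hFint : ∀ k, IntegrableOn (F k) (Ioo 0 x) := fun k => ((hb k).1.ofReal).const_mul _
  have hGk : ∀ k : ℕ, 0 < Real.Gamma (ν * (k + 1 : ℕ)) := fun k =>
    Real.Gamma_pos_of_pos (by positivity)
  have hFn : ∀ k, ∫ y in Ioo 0 x, ‖F k y‖ =
      Real.Gamma (1 - ν) * (‖p (k+1)‖ * (x ^ ν) ^ k / Real.Gamma (ν * k + 1)) := by
    intro k
    have : ∫ y in Ioo 0 x, ‖F k y‖ = ∫ y in Ioo 0 x, (‖p (k+1)‖ * (1 / Real.Gamma (ν * (k + 1 : ℕ)))) *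
        (y ^ (ν * (k + 1 : ℕ) - 1) * (x - y) ^ (-ν)) := by
      refine setIntegral_congr_fun measurableSet_Ioo fun y hy => ?_
      have h1 : 0 < y := hy.1
      have h2 : 0 < x - y := sub_pos.2 hy.2
      have h3 := hGk k
      simp only [hF]
      rw [norm_mul, norm_mul, Complex.norm_real, Complex.norm_real, Real.norm_of_nonneg (by positivity),
        Real.norm_of_nonneg (by positivity)]
    rw [this, MeasureTheory.integral_const_mul, (hb k).2]
    have := (hGk k).ne'
    field_simp
  have hFi : ∀ k, ∫ y in Ioo 0 x, F k y =
      (Real.Gamma (1 - ν) : ℂ) * (p (k+1) * ((x ^ ν : ℝ) : ℂ) ^ k / (Real.Gamma (ν * k + 1) : ℂ)) := by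
    intro k
    simp only [hF]
    rw [MeasureTheory.integral_const_mul, integral_complex_ofReal, (hb k).2]
    have : (Real.Gamma (ν * (k + 1 : ℕ)) : ℂ) ≠ 0 := by exact_mod_cast (hGk k).ne'
    push_cast at *
    field_simp
  have hsum : Summable fun k => ∫ y in Ioo 0 x, ‖F k y‖ := by
    simp_rw [hFn]
    exact (summ ν hν0 _ (geomBd_shift p hp) (x ^ ν) (by positivity)).mul_left _
  have hmain := hasSum_integral_of_summable_integral_norm hFint hsum
  simp_rw [hFi] at hmain
  have hmain2 := (GS_summable ν hν0 _ (geomBd_shift p hp) ((x ^ ν : ℝ) : ℂ)).hasSum.mul_left (Real.Gamma (1 - ν) : ℂ)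
  rw [GS, hmain2.unique hmain]
  refine setIntegral_congr_fun measurableSet_Ioo fun y hy => ?_
  obtain ⟨d, h1, h2⟩ := GS_rpow_deriv ν hν0 p hp y hy.1
  rw [h1.deriv, ← (h2.mul_left (((x - y) ^ (-ν) : ℝ) : ℂ)).tsum_eq]
  congr 1
  funext k
  simp only [hF]
  push_cast
  ring

lemma hadamard_GS (ν t0 : ℝ) (hν : ν ∈ Ioo (0:ℝ) 1) (ht0 : 0 < t0) (p : ℕ → ℂ) (hp : GeomBd p)
    (u : ℝ → ℂ) (hu : ∀ t, t0 < t → u t = GS ν p (((Real.log (t / t0)) ^ ν : ℝ) : ℂ))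
    (t : ℝ) (ht : t0 < t) :
    hadamardCaputoC ν t0 u t = GS ν (fun k => p (k + 1)) (((Real.log (t / t0)) ^ ν : ℝ) : ℂ) := by
  have hlogpos : ∀ s, t0 < s → 0 < Real.log (s / t0) := fun s hs =>
    Real.log_pos ((one_lt_div ht0).2 hs)
  have hder : ∀ s, t0 < s → HasDerivAt (fun s => Real.log (s / t0)) (1 / s) s := by
    intro s hs
    have hs0 := ht0.trans hs
    convert ((hasDerivAt_id s).div_const t0).log (by simp; constructor <;> positivity) using 1
    · rfl
    · field_simp
      exact (div_self hs0.ne').symm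
  have hmono : StrictMonoOn (fun s => Real.log (s / t0)) (Ioi 0) := by
    intro a ha b hb hab
    have ha' : 0 < a := ha
    exact Real.log_lt_log (by positivity) (by gcongr)
  have himg : (fun s => Real.log (s / t0)) '' Ioo t0 t = Ioo 0 (Real.log (t / t0)) := by
    ext y
    constructor
    · rintro ⟨s, hs, rfl⟩
      exact ⟨hlogpos s hs.1, hmono (ht0.trans hs.1) (ht0.trans ht) hs.2⟩
    · rintro ⟨h1, h2⟩
      refine ⟨t0 * Real.exp y, ⟨?_, ?_⟩, ?_⟩
      · have := Real.one_lt_exp_iff.2 h1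
        nlinarith
      · rw [Real.lt_log_iff_exp_lt (by have := ht0.trans ht; positivity), lt_div_iff₀ ht0] at h2
        linarith
      · simp [ht0.ne']
  have hcv := integral_image_eq_integral_abs_deriv_smul (s := Ioo t0 t) measurableSet_Ioo
    (fun s hs => (hder s hs.1).hasDerivWithinAt)
    (hmono.injOn.mono fun s hs => ht0.trans hs.1)
    (fun y => (((Real.log (t / t0) - y) ^ (-ν) : ℝ) : ℂ) *
      deriv (fun y : ℝ => GS ν p ((y ^ ν : ℝ) : ℂ)) y)
  rw [himg, frac_int ν hν p hp _ (hlogpos t ht)] at hcv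
  have hG1 : (Real.Gamma (1 - ν) : ℂ) ≠ 0 := by
    exact_mod_cast (Real.Gamma_pos_of_pos (by linarith [hν.2])).ne'
  have : ∫ τ in t0..t, (((Real.log (t / τ)) ^ (-ν) : ℝ) : ℂ) * ((τ : ℂ) * deriv u τ) / (τ : ℂ) =
      (Real.Gamma (1 - ν) : ℂ) * GS ν (fun k => p (k + 1)) (((Real.log (t / t0)) ^ ν : ℝ) : ℂ) := by
    rw [hcv, intervalIntegral.integral_of_le ht.le, integral_Ioc_eq_integral_Ioo]
    refine setIntegral_congr_fun measurableSet_Ioo fun s hs => ?_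
    have hs0 : 0 < s := ht0.trans hs.1
    obtain ⟨d, h1, -⟩ := GS_rpow_deriv ν hν.1 p hp _ (hlogpos s hs.1)
    have h2 : HasDerivAt u ((1 / s : ℝ) • d) s := by
      refine (h1.scomp s (hder s hs.1)).congr_of_eventuallyEq ?_
      filter_upwards [Ioi_mem_nhds hs.1] with r hr using hu r hr
    rw [h2.deriv, h1.deriv, abs_of_pos (by positivity), Real.log_div (ht0.trans ht).ne' hs0.ne',
      Real.log_div (ht0.trans ht).ne' ht0.ne', Real.log_div hs0.ne' ht0.ne', sub_sub_sub_cancel_right,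
      Complex.real_smul, Complex.real_smul]
    have : (s : ℂ) ≠ 0 := by exact_mod_cast hs0.ne'
    push_cast
    field_simp
  rw [hadamardCaputoC, this]
  field_simp

/-- **Theorem 3.1, Fourier-space form.** The function
`u*(t) = ½(1+λ/w) E_{ν,1}(η₁ log^ν(t/t0)) + ½(1-λ/w) E_{ν,1}(η₂ log^ν(t/t0))`,
with `w = √(λ² - c²β²)`, `η₁ = -λ + w`, `η₂ = -λ - w`, satisfies `u*(t0) = 1` and the
time-fractional telegraph equation (in Fourier space)
`D^ν D^ν u* + 2λ D^ν u* = -c²β² u*` for `t > t0`, where `D^ν` is the Caputo-type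
Hadamard derivative of order `ν` with base point `t0`. -/
theorem hadamard_fractional_telegraph_fourier
    (ν lam c t0 β : ℝ) (hν : ν ∈ Set.Ioo (0 : ℝ) 1) (hlam : 0 < lam) (hc : 0 < c)
    (ht0 : 0 < t0) (hne : lam ^ 2 ≠ c ^ 2 * β ^ 2)
    (w η₁ η₂ : ℂ)
    (hw : w = ((lam ^ 2 - c ^ 2 * β ^ 2 : ℝ) : ℂ) ^ (1 / 2 : ℂ))
    (hη₁ : η₁ = -(lam : ℂ) + w) (hη₂ : η₂ = -(lam : ℂ) - w)
    (u : ℝ → ℂ)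
    (hu : u = fun t =>
      (1 / 2 : ℂ) * (1 + (lam : ℂ) / w) *
          mittagLeffler ν 1 (η₁ * (((Real.log (t / t0)) ^ ν : ℝ) : ℂ)) +
        (1 / 2 : ℂ) * (1 - (lam : ℂ) / w) *
          mittagLeffler ν 1 (η₂ * (((Real.log (t / t0)) ^ ν : ℝ) : ℂ))) :
    u t0 = 1 ∧
      ∀ t, t0 < t →
        hadamardCaputoC ν t0 (fun τ => hadamardCaputoC ν t0 u τ) t +
            2 * (lam : ℂ) * hadamardCaputoC ν t0 u t
          = -((c : ℂ) ^ 2 * (β : ℂ) ^ 2) * u t := by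
  have hw2 : w ^ 2 = (lam : ℂ) ^ 2 - (c : ℂ) ^ 2 * (β : ℂ) ^ 2 := by
    rw [hw, ← Complex.cpow_nat_mul]
    simp
  have hw0 : w ≠ 0 := by
    intro h0
    rw [h0] at hw2
    apply hne
    have : (lam : ℂ) ^ 2 = (c : ℂ) ^ 2 * (β : ℂ) ^ 2 := by linear_combination -hw2
    exact_mod_cast this
  set a : ℂ := (1 / 2 : ℂ) * (1 + (lam : ℂ) / w) with ha
  set b : ℂ := (1 / 2 : ℂ) * (1 - (lam : ℂ) / w) with hb
  have hgeom : ∀ η : ℂ, GeomBd (fun k => η ^ k) := fun η =>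
    ⟨1, ‖η‖, norm_nonneg _, fun k => by simp⟩
  set p : ℕ → ℂ := fun k => a * η₁ ^ k + b * η₂ ^ k with hp
  have hpb : GeomBd p := by
    refine ⟨‖a‖ + ‖b‖, max ‖η₁‖ ‖η₂‖, by positivity, fun k => ?_⟩
    calc ‖p k‖ ≤ ‖a‖ * ‖η₁‖ ^ k + ‖b‖ * ‖η₂‖ ^ k := by
          refine (norm_add_le _ _).trans_eq ?_
          simp
      _ ≤ ‖a‖ * (max ‖η₁‖ ‖η₂‖) ^ k + ‖b‖ * (max ‖η₁‖ ‖η₂‖) ^ k := by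
          gcongr
          · exact le_max_left _ _
          · exact le_max_right _ _
      _ = _ := by ring
  have hML : ∀ η z : ℂ, HasSum (fun k : ℕ => η ^ k * z ^ k / (Real.Gamma (ν * k + 1) : ℂ))
      (mittagLeffler ν 1 (η * z)) := by
    intro η z
    have h := (GS_summable ν hν.1 _ (hgeom η) z).hasSum
    simpa only [mittagLeffler, mul_pow] using h
  have huGS : ∀ t, u t = GS ν p (((Real.log (t / t0)) ^ ν : ℝ) : ℂ) := by
    intro t
    rw [hu, GS]
    simp only
    rw [← (((hML η₁ (((Real.log (t / t0)) ^ ν : ℝ) : ℂ)).mul_left a).add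
      ((hML η₂ (((Real.log (t / t0)) ^ ν : ℝ) : ℂ)).mul_left b)).tsum_eq]
    congr 1
    funext k
    simp only [hp]
    ring
  refine ⟨?_, fun t ht => ?_⟩
  · have hML0 : mittagLeffler ν 1 0 = 1 := by
      rw [mittagLeffler, tsum_eq_single 0]
      · simp
      · intro k hk
        simp [hk]
    rw [hu]
    simp only [div_self ht0.ne', Real.log_one, Real.zero_rpow hν.1.ne', Complex.ofReal_zero, mul_zero, hML0]
    rw [ha, hb]
    ring
  · have hD := hadamard_GS ν t0 hν ht0 p hpb u (fun t _ => huGS t)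
    have hp1 := geomBd_shift p hpb
    have hp2 := geomBd_shift _ hp1
    have hDD := hadamard_GS ν t0 hν ht0 _ hp1 (fun τ => hadamardCaputoC ν t0 u τ) hD
    rw [hDD t ht, hD t ht, huGS t]
    set z : ℂ := (((Real.log (t / t0)) ^ ν : ℝ) : ℂ)
    have s0 := (GS_summable ν hν.1 _ hpb z).hasSum.mul_left (-((c : ℂ) ^ 2 * (β : ℂ) ^ 2))
    have s1 := (GS_summable ν hν.1 _ hp1 z).hasSum.mul_left (2 * (lam : ℂ))
    have s2 := (GS_summable ν hν.1 _ hp2 z).hasSum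
    refine (s2.add s1).unique ?_
    convert! s0 using 1
    funext k
    have e1 : η₁ ^ 2 + 2 * lam * η₁ = -((c : ℂ) ^ 2 * (β : ℂ) ^ 2) := by
      rw [hη₁]; linear_combination hw2
    have e2 : η₂ ^ 2 + 2 * lam * η₂ = -((c : ℂ) ^ 2 * (β : ℂ) ^ 2) := by
      rw [hη₂]; linear_combination hw2
    have e3 : p (k + 1 + 1) + 2 * lam * p (k + 1) = -((c : ℂ) ^ 2 * (β : ℂ) ^ 2) * p k := by
      simp only [hp]
      linear_combination a * η₁ ^ k * e1 + b * η₂ ^ k * e2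
    linear_combination z ^ k / (Real.Gamma (ν * k + 1) : ℂ) * e3
end

section
/- (Proposition 3.2, Fourier-space form.) Let ν ∈ (0,1/2], α ∈ (0,2], λ > 0, c > 0, t0 > 0 and β ∈ ℝ with λ² ≠ c²|β|^α. Let w = √(λ² - c²|β|^α) ∈ ℂ (principal branch), r₁ = -λ + w, r₂ = -λ - w, and define u* : [t0,∞) → ℂ by u*(t) = ½ (1 + λ/w) E_{ν,1}(r₁ (log(t/t0))^ν) + ½ (1 - λ/w) E_{ν,1}(r₂ (log(t/t0))^ν). Then u*(t0) = 1 and, for every t > t0, (D^ν (D^ν u*))(t) + 2λ (D^ν u*)(t) = -c²|β|^α u*(t), where D^ν is the Caputo-type Hadamard fractional derivative of order ν with base point t0. (That is, u* is the Fourier transform at frequency β of the fundamental solution of the space-time fractional telegraph equation with Hadamard time derivatives and Riesz space derivative of order α.) -/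
open MeasureTheory intervalIntegral

section Aux

open Filter Topology Set

lemma aux_gamma_lower {x ν : ℝ} (hν : 0 < ν) (hx : 1 < x) :
    Real.Gamma x * (x - 1) ^ ν ≤ Real.Gamma (x + ν) := by
  have h := Real.convexOn_log_Gamma.slope_mono_adjacent (x := x - 1) (y := x) (z := x + ν)
    (by simp; linarith) (by simp; linarith) (by linarith) (by linarith)
  have hg1 : 0 < Real.Gamma (x - 1) := Real.Gamma_pos_of_pos (by linarith)
  have hg : 0 < Real.Gamma x := Real.Gamma_pos_of_pos (by linarith)
  have hg2 : 0 < Real.Gamma (x + ν) := Real.Gamma_pos_of_pos (by linarith)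
  have e : Real.Gamma x = (x - 1) * Real.Gamma (x - 1) := by
    have := Real.Gamma_add_one (s := x - 1) (by linarith)
    simpa using this
  have hx1 : 0 < x - 1 := by linarith
  have e2 : Real.log (Real.Gamma x) = Real.log (x - 1) + Real.log (Real.Gamma (x - 1)) := by
    rw [e, Real.log_mul hx1.ne' hg1.ne']
  simp only [Function.comp_apply] at h
  rw [show x - (x - 1) = 1 by ring, show x + ν - x = ν by ring, div_one, le_div_iff₀ hν] at h
  have hp : 0 < (x - 1) ^ ν := Real.rpow_pos_of_pos hx1 _
  rw [← Real.log_le_log_iff (by positivity) hg2, Real.log_mul hg.ne' hp.ne', Real.log_rpow hx1]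
  rw [e2] at h ⊢
  linarith

lemma aux_gpos {ν : ℝ} (hν : 0 < ν) (k : ℕ) : 0 < Real.Gamma (ν * k + 1) :=
  Real.Gamma_pos_of_pos (by positivity)

lemma aux_summable {ν : ℝ} (hν : 0 < ν) {R : ℝ} (hR : 0 ≤ R) :
    Summable fun k : ℕ => R ^ k / Real.Gamma (ν * k + 1) := by
  rcases hR.eq_or_lt with rfl | hR
  · refine summable_of_ne_finset_zero (s := {0}) ?_
    intro k hk
    simp at hk
    simp [hk]
  refine summable_of_ratio_test_tendsto_lt_one (l := 0) one_pos ?_ ?_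
  · exact Eventually.of_forall fun k => (div_pos (pow_pos hR k) (aux_gpos hν k)).ne'
  have hlim : Tendsto (fun k : ℕ => R * (((ν * k) ^ ν)⁻¹)) atTop (𝓝 (R * 0)) := by
    refine Tendsto.const_mul _ (Tendsto.inv_tendsto_atTop ?_)
    exact (tendsto_rpow_atTop hν).comp
      (tendsto_natCast_atTop_atTop.const_mul_atTop hν)
  rw [mul_zero] at hlim
  refine squeeze_zero' (Eventually.of_forall fun k => by positivity) ?_ hlim
  filter_upwards [eventually_gt_atTop 0] with k hk
  have hk' : (0 : ℝ) < k := by exact_mod_cast hk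
  have h := aux_gamma_lower (x := ν * k + 1) hν (by have := mul_pos hν hk'; linarith)
  have g1 := aux_gpos hν k
  have g2 := aux_gpos hν (k + 1)
  rw [Real.norm_of_nonneg (by positivity), Real.norm_of_nonneg (by positivity)]
  rw [show ν * k + 1 + ν = ν * ((k + 1 : ℕ) : ℝ) + 1 by push_cast; ring,
    show ν * (k : ℝ) + 1 - 1 = ν * k by ring] at h
  have hp : 0 < (ν * (k : ℝ)) ^ ν := Real.rpow_pos_of_pos (by positivity) _
  rw [show R ^ (k + 1) / Real.Gamma (ν * ((k + 1 : ℕ) : ℝ) + 1) / (R ^ k / Real.Gamma (ν * k + 1))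
    = R * (Real.Gamma (ν * k + 1) / Real.Gamma (ν * ((k + 1 : ℕ) : ℝ) + 1)) by
      rw [pow_succ]; field_simp]
  refine mul_le_mul_of_nonneg_left ?_ hR.le
  rw [div_le_iff₀ g2, ← div_eq_inv_mul, le_div_iff₀ hp]
  exact h

lemma aux_beta {p q L : ℝ} (hp : 0 < p) (hq : 0 < q) (hL : 0 < L) :
    ∫ s in Ioo 0 L, s ^ (p - 1) * (L - s) ^ (q - 1) =
      L ^ (p + q - 1) * (Real.Gamma p * Real.Gamma q / Real.Gamma (p + q)) := by
  have h := Complex.betaIntegral_scaled (p : ℂ) (q : ℂ) hL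
  have hg : (Complex.Gamma (p + q : ℂ)) ≠ 0 := Complex.Gamma_ne_zero_of_re_pos (by simp; linarith)
  have h2 := Complex.Gamma_mul_Gamma_eq_betaIntegral (s := (p : ℂ)) (t := (q : ℂ))
    (by simpa) (by simpa)
  have h3 : Complex.betaIntegral p q = ((Real.Gamma p * Real.Gamma q / Real.Gamma (p + q) : ℝ) : ℂ) := by
    push_cast
    rw [← Complex.Gamma_ofReal, ← Complex.Gamma_ofReal, ← Complex.Gamma_ofReal, eq_div_iff
      (by simpa using hg), h2]
    push_cast
    ring
  rw [h3, intervalIntegral.integral_of_le hL.le, integral_Ioc_eq_integral_Ioo] at h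
  have h4 : (∫ s in Ioo 0 L, (s : ℂ) ^ ((p : ℂ) - 1) * ((L : ℂ) - s) ^ ((q : ℂ) - 1)) =
      ((∫ s in Ioo 0 L, s ^ (p - 1) * (L - s) ^ (q - 1) : ℝ) : ℂ) := by
    rw [← integral_complex_ofReal]
    refine setIntegral_congr_fun measurableSet_Ioo fun s hs => ?_
    have h0 : 0 ≤ s := hs.1.le
    have h1 : 0 ≤ L - s := by linarith [hs.2]
    push_cast [Complex.ofReal_cpow h0, Complex.ofReal_cpow h1]
    rfl
  rw [h4] at h
  have h5 : (L : ℂ) ^ ((p : ℂ) + q - 1) = ((L ^ (p + q - 1) : ℝ) : ℂ) := by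
    push_cast [Complex.ofReal_cpow hL.le]; rfl
  rw [h5] at h
  exact_mod_cast h

lemma aux_beta_integrable {p q L : ℝ} (hp : 0 < p) (hq : 0 < q) (hL : 0 < L) :
    IntegrableOn (fun s : ℝ => s ^ (p - 1) * (L - s) ^ (q - 1)) (Ioo 0 L) := by
  refine Integrable.of_integral_ne_zero ?_
  rw [aux_beta hp hq hL]
  have := Real.Gamma_pos_of_pos hp
  have := Real.Gamma_pos_of_pos hq
  have := Real.Gamma_pos_of_pos (add_pos hp hq)
  have := Real.rpow_pos_of_pos hL (p + q - 1)
  positivity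

/-- power series with coefficients `b k / Γ(ν k + 1)`. -/
noncomputable def auxF (ν : ℝ) (b : ℕ → ℂ) (x : ℝ) : ℂ :=
  ∑' k : ℕ, b k / (Real.Gamma (ν * k + 1) : ℂ) * (x : ℂ) ^ k

lemma aux_term_norm {ν : ℝ} (hν : 0 < ν) (b : ℕ → ℂ) {C R : ℝ}
    (hb : ∀ k, ‖b k‖ ≤ C * R ^ k) (x : ℝ) (k : ℕ) :
    ‖b k / (Real.Gamma (ν * k + 1) : ℂ) * (x : ℂ) ^ k‖ ≤
      C * ((R * |x|) ^ k / Real.Gamma (ν * k + 1)) := by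
  have g := aux_gpos hν k
  rw [norm_mul, norm_div, norm_pow, Complex.norm_real, Complex.norm_real,
    Real.norm_of_nonneg g.le, Real.norm_eq_abs]
  calc ‖b k‖ / Real.Gamma (ν * k + 1) * |x| ^ k
      ≤ (C * R ^ k) / Real.Gamma (ν * k + 1) * |x| ^ k := by
        gcongr
        exact hb k
    _ = _ := by rw [mul_pow]; ring

lemma aux_summable_F {ν : ℝ} (hν : 0 < ν) (b : ℕ → ℂ) {C R : ℝ} (hR : 0 ≤ R)
    (hb : ∀ k, ‖b k‖ ≤ C * R ^ k) (x : ℝ) :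
    Summable fun k : ℕ => b k / (Real.Gamma (ν * k + 1) : ℂ) * (x : ℂ) ^ k :=
  Summable.of_norm_bounded ((aux_summable hν (by positivity)).mul_left C)
    (aux_term_norm hν b hb x)

lemma aux_deriv_F {ν : ℝ} (hν : 0 < ν) (b : ℕ → ℂ) {C R : ℝ} (hC : 0 ≤ C) (hR : 0 ≤ R)
    (hb : ∀ k, ‖b k‖ ≤ C * R ^ k) (x : ℝ) :
    HasDerivAt (auxF ν b)
      (∑' k : ℕ, b (k + 1) / (Real.Gamma (ν * (k + 1 : ℕ) + 1) : ℂ) *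
        (((k + 1 : ℕ) : ℂ) * (x : ℂ) ^ k)) x := by
  set M := |x| + 1 with hM
  have hM1 : 1 ≤ M := by have := abs_nonneg x; linarith
  let g' : ℕ → ℝ → ℂ := fun k y =>
    b k / (Real.Gamma (ν * k + 1) : ℂ) * ((k : ℂ) * (y : ℂ) ^ (k - 1))
  have hbd : ∀ (k : ℕ) (y : ℝ), |y| ≤ M →
      ‖g' k y‖ ≤ C * ((R * 2 * M) ^ k / Real.Gamma (ν * k + 1)) := by
    intro k y hy
    have g := aux_gpos hν k
    simp only [g']
    rw [norm_mul, norm_div, norm_mul, norm_pow, Complex.norm_real, Complex.norm_real,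
      Real.norm_of_nonneg g.le, Real.norm_eq_abs, Complex.norm_natCast]
    have h1 : (k : ℝ) ≤ 2 ^ k := by exact_mod_cast (Nat.lt_two_pow_self (n := k)).le
    have h2 : |y| ^ (k - 1) ≤ M ^ k :=
      (pow_le_pow_left₀ (abs_nonneg y) hy _).trans (pow_le_pow_right₀ hM1 (Nat.sub_le _ _))
    calc ‖b k‖ / Real.Gamma (ν * k + 1) * (k * |y| ^ (k - 1))
        ≤ (C * R ^ k) / Real.Gamma (ν * k + 1) * (2 ^ k * M ^ k) := by
          gcongr
          exact hb k
      _ = _ := by rw [mul_pow, mul_pow]; ring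
  have hsum : Summable fun k : ℕ => C * ((R * 2 * M) ^ k / Real.Gamma (ν * k + 1)) :=
    (aux_summable hν (by positivity)).mul_left C
  have key := hasDerivAt_tsum_of_isPreconnected (𝕜 := ℝ) (t := Ioo (-M) M)
    (g := fun (k : ℕ) (y : ℝ) => b k / (Real.Gamma (ν * k + 1) : ℂ) * (y : ℂ) ^ k)
    (g' := g') (y := x) (y₀ := x) hsum isOpen_Ioo isPreconnected_Ioo
    (by
      intro k y _
      have h := ((hasDerivAt_pow k (y : ℂ)).comp_ofReal).const_mul
        (b k / (Real.Gamma (ν * k + 1) : ℂ))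
      exact h)
    (fun k y hy => hbd k y (abs_le.2 ⟨hy.1.le, hy.2.le⟩))
    (abs_lt.1 (by linarith : |x| < M))
    (aux_summable_F hν b hR hb x)
    (abs_lt.1 (by linarith : |x| < M))
  have hs : Summable fun k => g' k x :=
    Summable.of_norm_bounded hsum fun k => hbd k x (by linarith)
  have e : ∑' k, g' k x = ∑' k : ℕ, b (k + 1) / (Real.Gamma (ν * (k + 1 : ℕ) + 1) : ℂ) *
        (((k + 1 : ℕ) : ℂ) * (x : ℂ) ^ k) := by
    rw [hs.tsum_eq_zero_add]
    simp [g']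
  rw [← e]
  exact key

/-- the terms of the derivative in the logarithmic variable -/
noncomputable def auxD (ν : ℝ) (b : ℕ → ℂ) (k : ℕ) (s : ℝ) : ℂ :=
  b (k + 1) / (Real.Gamma (ν * (k + 1 : ℕ)) : ℂ) * ((s ^ (ν * (k + 1 : ℕ) - 1) : ℝ) : ℂ)

lemma aux_deriv_G {ν : ℝ} (hν : 0 < ν) (b : ℕ → ℂ) {C R : ℝ} (hC : 0 ≤ C) (hR : 0 ≤ R)
    (hb : ∀ k, ‖b k‖ ≤ C * R ^ k) {s : ℝ} (hs : 0 < s) :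
    HasDerivAt (fun s : ℝ => auxF ν b (s ^ ν)) (∑' k, auxD ν b k s) s := by
  have h1 := aux_deriv_F hν b hC hR hb (s ^ ν)
  have h2 := Real.hasDerivAt_rpow_const (x := s) (p := ν) (Or.inl hs.ne')
  have h := h1.scomp s h2
  refine h.congr_deriv ?_
  rw [← tsum_const_smul'']
  refine tsum_congr fun k => ?_
  have hk : (0 : ℝ) < ν * (k + 1 : ℕ) := by positivity
  have g : Real.Gamma (ν * (k + 1 : ℕ)) ≠ 0 := (Real.Gamma_pos_of_pos hk).ne'
  rw [auxD, Real.Gamma_add_one hk.ne']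
  have e : s ^ (ν * (k + 1 : ℕ) - 1) = s ^ (ν - 1) * (s ^ ν) ^ k := by
    rw [← Real.rpow_natCast, ← Real.rpow_mul hs.le, ← Real.rpow_add hs]
    congr 1; push_cast; ring
  rw [e]
  have hν' : (ν : ℂ) ≠ 0 := by exact_mod_cast hν.ne'
  have g' : (Real.Gamma (ν * (k + 1 : ℕ)) : ℂ) ≠ 0 := by exact_mod_cast g
  have hk' : ((k + 1 : ℕ) : ℂ) ≠ 0 := by exact_mod_cast Nat.succ_ne_zero k
  rw [Complex.real_smul]
  push_cast at g' hk' ⊢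
  field_simp

lemma aux_integral {ν : ℝ} (hν : 0 < ν) (hν1 : ν < 1) (b : ℕ → ℂ) {C R : ℝ} (hR : 0 ≤ R)
    (hb : ∀ k, ‖b k‖ ≤ C * R ^ k) {L : ℝ} (hL : 0 < L) :
    ∫ s in Ioo 0 L, (((L - s) ^ (-ν) : ℝ) : ℂ) * ∑' k, auxD ν b k s =
      (Real.Gamma (1 - ν) : ℂ) * auxF ν (fun k => b (k + 1)) (L ^ ν) := by
  let c : ℕ → ℂ := fun k => b (k + 1) / (Real.Gamma (ν * (k + 1 : ℕ)) : ℂ)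
  let φ : ℕ → ℝ → ℝ := fun k s => s ^ (ν * (k + 1 : ℕ) - 1) * (L - s) ^ ((1 - ν) - 1)
  have hpos : ∀ k : ℕ, 0 < ν * (k + 1 : ℕ) := fun k => by positivity
  have hφi : ∀ k, IntegrableOn (φ k) (Ioo 0 L) := fun k =>
    aux_beta_integrable (hpos k) (by linarith) hL
  have hφ : ∀ k, ∫ s in Ioo 0 L, φ k s = (L ^ ν) ^ k *
      (Real.Gamma (ν * (k + 1 : ℕ)) * Real.Gamma (1 - ν) / Real.Gamma (ν * k + 1)) := by
    intro k
    have := aux_beta (hpos k) (show 0 < 1 - ν by linarith) hL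
    simp only [φ]
    rw [this, ← Real.rpow_natCast, ← Real.rpow_mul hL.le]
    congr 2
    · push_cast; ring
    · congr 1; push_cast; ring
  have hb' : ∀ k, ‖b (k + 1)‖ ≤ (C * R) * R ^ k := fun k => by
    have := hb (k + 1); rw [pow_succ] at this; linarith
  have hg1 : 0 < Real.Gamma (1 - ν) := Real.Gamma_pos_of_pos (by linarith)
  have hsF := aux_summable_F hν (fun k => b (k + 1)) hR hb' (L ^ ν)
  have hterm : ∀ k, ∫ s in Ioo 0 L, c k * ((φ k s : ℝ) : ℂ) = (Real.Gamma (1 - ν) : ℂ) *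
      (b (k + 1) / (Real.Gamma (ν * k + 1) : ℂ) * ((L ^ ν : ℝ) : ℂ) ^ k) := by
    intro k
    rw [MeasureTheory.integral_const_mul, integral_complex_ofReal, hφ k]
    have g : (Real.Gamma (ν * (k + 1 : ℕ)) : ℂ) ≠ 0 := by
      exact_mod_cast (Real.Gamma_pos_of_pos (hpos k)).ne'
    simp only [c]
    push_cast at g ⊢
    field_simp
  have hnorm : ∀ k, ∫ s in Ioo 0 L, ‖c k * ((φ k s : ℝ) : ℂ)‖ = Real.Gamma (1 - ν) *
      ‖b (k + 1) / (Real.Gamma (ν * k + 1) : ℂ) * ((L ^ ν : ℝ) : ℂ) ^ k‖ := by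
    intro k
    have e : ∫ s in Ioo 0 L, ‖c k * ((φ k s : ℝ) : ℂ)‖ = ∫ s in Ioo 0 L, ‖c k‖ * φ k s := by
      refine setIntegral_congr_fun measurableSet_Ioo fun s hs => ?_
      have h0 : 0 ≤ s := hs.1.le
      have h1 : 0 ≤ L - s := by linarith [hs.2]
      have : 0 ≤ φ k s := mul_nonneg (Real.rpow_nonneg h0 _) (Real.rpow_nonneg h1 _)
      simp only [norm_mul, Complex.norm_real, Real.norm_of_nonneg this]
    rw [e, MeasureTheory.integral_const_mul, hφ k]
    have g := Real.Gamma_pos_of_pos (hpos k)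
    have g2 := aux_gpos hν k
    have hLν : 0 < L ^ ν := Real.rpow_pos_of_pos hL _
    simp only [c]
    rw [norm_mul, norm_div, norm_div, norm_pow, Complex.norm_real, Complex.norm_real,
      Complex.norm_real, Real.norm_of_nonneg g.le, Real.norm_of_nonneg g2.le,
      Real.norm_of_nonneg hLν.le]
    field_simp
  have key := hasSum_integral_of_summable_integral_norm (μ := volume.restrict (Ioo 0 L))
    (F := fun k s => c k * ((φ k s : ℝ) : ℂ))
    (fun k => ((hφi k).ofReal (𝕜 := ℂ)).const_mul (c k))
    (by simp only [hnorm]; exact hsF.norm.mul_left _)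
  have e1 : ∫ s in Ioo 0 L, (((L - s) ^ (-ν) : ℝ) : ℂ) * ∑' k, auxD ν b k s =
      ∫ s in Ioo 0 L, ∑' k, c k * ((φ k s : ℝ) : ℂ) := by
    refine setIntegral_congr_fun measurableSet_Ioo fun s hs => ?_
    rw [← tsum_mul_left]
    refine tsum_congr fun k => ?_
    simp only [auxD, c, φ]
    rw [show 1 - ν - 1 = -ν by ring]
    push_cast
    ring
  rw [e1, ← key.tsum_eq]
  simp only [hterm]
  rw [tsum_mul_left]
  rfl

lemma aux_main {ν : ℝ} (hν : 0 < ν) (hν1 : ν < 1) (b : ℕ → ℂ) {C R : ℝ} (hC : 0 ≤ C) (hR : 0 ≤ R)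
    (hb : ∀ k, ‖b k‖ ≤ C * R ^ k) {t0 t : ℝ} (ht0 : 0 < t0) (ht : t0 < t) (u : ℝ → ℂ)
    (hu : ∀ τ, t0 < τ → u τ = auxF ν b (Real.log (τ / t0) ^ ν)) :
    hadamardCaputoC ν t0 u t = auxF ν (fun k => b (k + 1)) (Real.log (t / t0) ^ ν) := by
  have htp : 0 < t := ht0.trans ht
  set L := Real.log (t / t0) with hLdef
  have hL : 0 < L := Real.log_pos ((one_lt_div ht0).2 ht)
  have hlogd : ∀ τ, 0 < τ → HasDerivAt (fun τ => Real.log (τ / t0)) (τ⁻¹) τ := by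
    intro τ hτ
    have h := ((hasDerivAt_id τ).div_const t0).log (by simp; exact ⟨hτ.ne', ht0.ne'⟩)
    refine h.congr_deriv ?_
    simp only [id]
    field_simp
  have hder : ∀ τ, t0 < τ → deriv u τ = ((τ⁻¹ : ℝ) : ℂ) * ∑' k, auxD ν b k (Real.log (τ / t0)) := by
    intro τ hτ
    have hs : 0 < Real.log (τ / t0) := Real.log_pos ((one_lt_div ht0).2 hτ)
    have h := (aux_deriv_G hν b hC hR hb hs).scomp τ (hlogd τ (ht0.trans hτ))
    have e : u =ᶠ[𝓝 τ] ((fun s : ℝ => auxF ν b (s ^ ν)) ∘ fun τ => Real.log (τ / t0)) := by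
      filter_upwards [lt_mem_nhds hτ] with y hy
      exact hu y hy
    rw [e.deriv_eq, h.deriv, Complex.real_smul]
  have himg : (fun τ => Real.log (τ / t0)) '' Ioo t0 t = Ioo 0 L := by
    ext s
    constructor
    · rintro ⟨τ, hτ, rfl⟩
      refine ⟨Real.log_pos ((one_lt_div ht0).2 hτ.1), ?_⟩
      exact Real.log_lt_log (div_pos (ht0.trans hτ.1) ht0) (div_lt_div_of_pos_right hτ.2 ht0)
    · intro hs
      refine ⟨t0 * Real.exp s, ⟨?_, ?_⟩, ?_⟩
      · have := Real.one_lt_exp_iff.2 hs.1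
        nlinarith
      · have : Real.exp s < t / t0 := (Real.lt_log_iff_exp_lt (by positivity)).1 hs.2
        rw [lt_div_iff₀ ht0] at this
        linarith
      · simp only
        rw [mul_div_cancel_left₀ _ ht0.ne', Real.log_exp]
  have hinj : InjOn (fun τ => Real.log (τ / t0)) (Ioo t0 t) := by
    intro x hx y hy hxy
    have := Real.log_injOn_pos (div_pos (ht0.trans hx.1) ht0) (div_pos (ht0.trans hy.1) ht0) hxy
    field_simp at this
    exact this
  have hcv := integral_image_eq_integral_abs_deriv_smul (s := Ioo t0 t)
    (f := fun τ => Real.log (τ / t0)) (f' := fun τ => τ⁻¹) measurableSet_Ioo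
    (fun x hx => (hlogd x (ht0.trans hx.1)).hasDerivWithinAt) hinj
    (fun s => (((L - s) ^ (-ν) : ℝ) : ℂ) * ∑' k, auxD ν b k s)
  rw [himg, aux_integral hν hν1 b hR hb hL] at hcv
  have hg1 : (Real.Gamma (1 - ν) : ℂ) ≠ 0 := by
    exact_mod_cast (Real.Gamma_pos_of_pos (by linarith)).ne'
  rw [hadamardCaputoC, intervalIntegral.integral_of_le ht.le, integral_Ioc_eq_integral_Ioo]
  have e : ∫ τ in Ioo t0 t, (((Real.log (t / τ)) ^ (-ν) : ℝ) : ℂ) * ((τ : ℂ) * deriv u τ) / (τ : ℂ)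
      = (Real.Gamma (1 - ν) : ℂ) * auxF ν (fun k => b (k + 1)) (L ^ ν) := by
    rw [hcv]
    refine setIntegral_congr_fun measurableSet_Ioo fun τ hτ => ?_
    have hτp : 0 < τ := ht0.trans hτ.1
    rw [hder τ hτ.1, abs_of_pos (inv_pos.2 hτp), Complex.real_smul]
    have e2 : L - Real.log (τ / t0) = Real.log (t / τ) := by
      rw [hLdef, Real.log_div htp.ne' ht0.ne', Real.log_div hτp.ne' ht0.ne',
        Real.log_div htp.ne' hτp.ne']
      ring
    rw [e2]
    have : (τ : ℂ) ≠ 0 := by exact_mod_cast hτp.ne'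
    push_cast
    field_simp
  rw [e]
  field_simp

end Aux

/-- **Proposition 3.2, Fourier-space form.** With
`w = √(λ² - c²|β|^α)`, `r₁ = -λ + w`, `r₂ = -λ - w`, the function
`u*(t) = ½(1+λ/w) E_{ν,1}(r₁ log^ν(t/t0)) + ½(1-λ/w) E_{ν,1}(r₂ log^ν(t/t0))`
satisfies `u*(t0) = 1` and the space-time fractional telegraph equation (in
Fourier space) `D^ν D^ν u* + 2λ D^ν u* = -c²|β|^α u*` for `t > t0`, where `D^ν`
is the Caputo-type Hadamard derivative with base point `t0`. -/
theorem hadamard_riesz_fractional_telegraph_fourier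
    (ν α lam c t0 β : ℝ) (hν : ν ∈ Set.Ioc (0 : ℝ) (1 / 2)) (hα : α ∈ Set.Ioc (0 : ℝ) 2)
    (hlam : 0 < lam) (hc : 0 < c) (ht0 : 0 < t0)
    (hne : lam ^ 2 ≠ c ^ 2 * |β| ^ α)
    (w r₁ r₂ : ℂ)
    (hw : w = ((lam ^ 2 - c ^ 2 * |β| ^ α : ℝ) : ℂ) ^ (1 / 2 : ℂ))
    (hr₁ : r₁ = -(lam : ℂ) + w) (hr₂ : r₂ = -(lam : ℂ) - w)
    (u : ℝ → ℂ)
    (hu : u = fun t =>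
      (1 / 2 : ℂ) * (1 + (lam : ℂ) / w) *
          mittagLeffler ν 1 (r₁ * (((Real.log (t / t0)) ^ ν : ℝ) : ℂ)) +
        (1 / 2 : ℂ) * (1 - (lam : ℂ) / w) *
          mittagLeffler ν 1 (r₂ * (((Real.log (t / t0)) ^ ν : ℝ) : ℂ))) :
    u t0 = 1 ∧
      ∀ t, t0 < t →
        hadamardCaputoC ν t0 (fun τ => hadamardCaputoC ν t0 u τ) t +
            2 * (lam : ℂ) * hadamardCaputoC ν t0 u t
          = -((c ^ 2 * |β| ^ α : ℝ) : ℂ) * u t := by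
  obtain ⟨hν0, hν2⟩ := hν
  have hν1 : ν < 1 := by linarith
  set A₁ : ℂ := (1 / 2 : ℂ) * (1 + (lam : ℂ) / w) with hA₁
  set A₂ : ℂ := (1 / 2 : ℂ) * (1 - (lam : ℂ) / w) with hA₂
  set q : ℝ := c ^ 2 * |β| ^ α with hq
  have hw2 : w ^ 2 = (lam : ℂ) ^ 2 - (q : ℂ) := by
    rw [hw, one_div, Complex.cpow_ofNat_inv_pow]
    push_cast
    ring
  have hq₁ : r₁ ^ 2 + 2 * (lam : ℂ) * r₁ = -(q : ℂ) := by
    rw [hr₁]; linear_combination hw2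
  have hq₂ : r₂ ^ 2 + 2 * (lam : ℂ) * r₂ = -(q : ℂ) := by
    rw [hr₂]; linear_combination hw2
  let b : ℕ → ℂ := fun k => A₁ * r₁ ^ k + A₂ * r₂ ^ k
  set R : ℝ := ‖r₁‖ + ‖r₂‖ with hR
  have hR0 : 0 ≤ R := by positivity
  set C : ℝ := ‖A₁‖ + ‖A₂‖ with hC
  have hC0 : 0 ≤ C := by positivity
  have hb : ∀ k, ‖b k‖ ≤ C * R ^ k := by
    intro k
    have h1 : ‖r₁‖ ^ k ≤ R ^ k :=
      pow_le_pow_left₀ (norm_nonneg _) (by have := norm_nonneg r₂; linarith) _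
    have h2 : ‖r₂‖ ^ k ≤ R ^ k :=
      pow_le_pow_left₀ (norm_nonneg _) (by have := norm_nonneg r₁; linarith) _
    calc ‖b k‖ ≤ ‖A₁ * r₁ ^ k‖ + ‖A₂ * r₂ ^ k‖ := norm_add_le _ _
      _ = ‖A₁‖ * ‖r₁‖ ^ k + ‖A₂‖ * ‖r₂‖ ^ k := by simp [norm_mul, norm_pow]
      _ ≤ ‖A₁‖ * R ^ k + ‖A₂‖ * R ^ k := by gcongr
      _ = C * R ^ k := by ring
  have hshift : ∀ (d : ℕ → ℂ) (D : ℝ), (∀ k, ‖d k‖ ≤ D * R ^ k) →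
      ∀ k, ‖d (k + 1)‖ ≤ (D * R) * R ^ k := by
    intro d D h k
    have := h (k + 1); rw [pow_succ] at this; linarith
  have hml : ∀ (r : ℂ) (x : ℝ), mittagLeffler ν 1 (r * (x : ℂ)) = auxF ν (fun k => r ^ k) x := by
    intro r x
    refine tsum_congr fun k => ?_
    rw [mul_pow]; ring
  have hsm : ∀ (r : ℂ) (x : ℝ),
      Summable fun k : ℕ => r ^ k / (Real.Gamma (ν * k + 1) : ℂ) * (x : ℂ) ^ k := fun r x =>
    aux_summable_F hν0 (fun k => r ^ k) (C := 1) (norm_nonneg r) (fun k => by simp) x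
  have huF : ∀ t, u t = auxF ν b (Real.log (t / t0) ^ ν) := by
    intro t
    rw [hu]
    simp only [hml]
    simp only [auxF]
    rw [← tsum_mul_left, ← tsum_mul_left,
      ← ((hsm r₁ _).mul_left A₁).tsum_add ((hsm r₂ _).mul_left A₂)]
    refine tsum_congr fun k => ?_
    simp only [b]
    ring
  refine ⟨?_, fun t ht => ?_⟩
  · rw [huF, div_self ht0.ne', Real.log_one, Real.zero_rpow hν0.ne', auxF,
      tsum_eq_single 0 (fun k hk => by simp [hk])]
    simp only [b, hA₁, hA₂]
    simp
    ring
  · have h1 : ∀ τ, t0 < τ → hadamardCaputoC ν t0 u τ =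
        auxF ν (fun k => b (k + 1)) (Real.log (τ / t0) ^ ν) := fun τ hτ =>
      aux_main hν0 hν1 b hC0 hR0 hb ht0 hτ u (fun s _ => huF s)
    have hb1 := hshift b C hb
    have h2 := aux_main hν0 hν1 (fun k => b (k + 1)) (mul_nonneg hC0 hR0) hR0 hb1 ht0 ht
      (fun τ => hadamardCaputoC ν t0 u τ) h1
    have hb2 := hshift (fun k => b (k + 1)) (C * R) hb1
    rw [h2, h1 t ht, huF t]
    simp only [auxF]
    rw [← tsum_mul_left, ← tsum_mul_left,
      ← (aux_summable_F hν0 _ hR0 hb2 _).tsum_add ((aux_summable_F hν0 _ hR0 hb1 _).mul_left _)]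
    refine tsum_congr fun k => ?_
    have hrec : b (k + 1 + 1) + 2 * (lam : ℂ) * b (k + 1) = -(q : ℂ) * b k := by
      simp only [b]
      linear_combination A₁ * r₁ ^ k * hq₁ + A₂ * r₂ ^ k * hq₂
    linear_combination (1 / (Real.Gamma (ν * k + 1) : ℂ) * ((Real.log (t / t0) ^ ν : ℝ) : ℂ) ^ k) * hrec
end
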